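/- Let (G,o) be a directed median graph and v a vertex of G. Then: (a) for all x, y ∈ F_o(v,G), x ⪯_o y holds if and only if x ≤_v y, i.e., the restriction of the order ≺_o to F_o(v,G) coincides with the restriction of the canonical basepoint order ≤_v to F_o(v,G); and (b) for any vertex u ∈ F_o(v,G), the principal filter F_o(u,G) is contained in F_o(v,G) and F_o(u,G) = {x ∈ F_o(v,G) : u ≤_v x}. -/

import Mathlib

/-- The interval `I(u,v)` in a graph. -/
def gInterval {V : Type} (G : SimpleGraph V) (u v : V) : Set V :=
  {w | G.dist u w + G.dist w v = G.dist u v}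

/-- A median graph: a connected graph in which every triple of vertices has a
unique median. -/
def IsMedianGraph {V : Type} (G : SimpleGraph V) : Prop :=
  G.Connected ∧ ∀ x y z : V, ∃! m : V,
    m ∈ gInterval G x y ∧ m ∈ gInterval G y z ∧ m ∈ gInterval G z x

/-- An orientation of the edges of a graph: each edge gets exactly one direction. -/
structure GraphOrientation {V : Type} (G : SimpleGraph V) where
  dir : V → V → Prop
  adj_of_dir : ∀ u v, dir u v → G.Adj u v
  total : ∀ u v, G.Adj u v → dir u v ∨ dir v u
  asymm : ∀ u v, dir u v → ¬ dir v u

/-- An orientation is admissible (defines a directed median graph) if opposite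
edges of every 4-cycle receive the same direction. -/
def IsAdmissible {V : Type} (G : SimpleGraph V) (o : GraphOrientation G) : Prop :=
  ∀ a b c d : V, G.Adj a b → G.Adj b c → G.Adj c d → G.Adj d a → a ≠ c → b ≠ d →
    (o.dir a b ↔ o.dir d c)

/-- The principal filter `F_o(v,G) = {x : v = x or v ≺_o x}` of a vertex `v`,
where `≺_o` is the partial order generated by the directed edges. -/
def oFilter {V : Type} {G : SimpleGraph V} (o : GraphOrientation G) (v : V) : Set V :=
  {x | Relation.ReflTransGen o.dir v x}

/-!
The key point is that if `y ∈ F_o(v)` and `z` is a neighbour of `y` closer to `v`, then `z → y` and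
`z ∈ F_o(v)`. To see this, go along a directed path from `v` to `y` and let `p → y` be its last
edge; by induction `p` is closer to `v` than `y`. If `z ≠ p`, the quadrangle condition closes `p`,
`y`, `z` to a 4-cycle with a vertex `m` closer to `v`; by induction `m → p` and `m ∈ F_o(v)`, and
the directions `m → p` and `p → y` are carried over to the opposite edges as `z → y` and `m → z`.
Hence directed paths starting at `v` are geodesics, and all geodesics from `v` to a vertex of
`F_o(v)` are directed.
-/

/-- A modular graph: a connected graph in which every triple of vertices has at least one median.
It is `IsMedianGraph` without the uniqueness of medians. -/
def IsModularGraph {V : Type} (G : SimpleGraph V) : Prop :=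
  G.Connected ∧ ∀ x y z : V, ∃ m : V,
    m ∈ gInterval G x y ∧ m ∈ gInterval G y z ∧ m ∈ gInterval G z x

section

variable {V : Type} {G : SimpleGraph V} {v w x y z : V}

theorem IsMedianGraph.isModularGraph (hG : IsMedianGraph G) : IsModularGraph G :=
  ⟨hG.1, fun x y z => (hG.2 x y z).exists⟩

theorem mem_gInterval : w ∈ gInterval G x y ↔ G.dist x w + G.dist w y = G.dist x y :=
  Iff.rfl

theorem right_mem_gInterval : y ∈ gInterval G x y := by
  rw [mem_gInterval, SimpleGraph.dist_self, add_zero]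

theorem gInterval_comm (G : SimpleGraph V) (x y : V) : gInterval G x y = gInterval G y x := by
  ext w
  rw [mem_gInterval, mem_gInterval, G.dist_comm (u := x) (v := w), G.dist_comm (u := w) (v := y),
    G.dist_comm (u := x) (v := y), add_comm]

theorem exists_adj_dist_add_one_eq (hxy : G.Reachable x y) (hne : x ≠ y) :
    ∃ z, G.Adj z y ∧ G.dist x z + 1 = G.dist x y := by
  obtain ⟨p, hp⟩ := hxy.symm.exists_walk_length_eq_dist
  cases p with
  | nil => exact absurd rfl hne
  | @cons _ z _ hyz q =>
    refine ⟨z, hyz.symm, le_antisymm ?_ ?_⟩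
    · rw [G.dist_comm (u := x) (v := y), ← hp, SimpleGraph.Walk.length_cons,
        G.dist_comm (u := x)]
      exact Nat.succ_le_succ (SimpleGraph.dist_le q)
    · rw [← SimpleGraph.dist_eq_one_iff_adj.2 hyz.symm]
      exact hyz.symm.reachable.dist_triangle_right x

theorem exists_adj_mem_gInterval (hxy : G.Reachable x y) (hx : x ∈ gInterval G v y)
    (hne : x ≠ y) :
    ∃ z, G.Adj z y ∧ x ∈ gInterval G v z ∧ G.dist v z + 1 = G.dist v y := by
  obtain ⟨z, hzy, hxz⟩ := exists_adj_dist_add_one_eq hxy hne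
  have hvy : G.dist v y ≤ G.dist v z + G.dist z y := hzy.reachable.dist_triangle_right v
  have hvz : G.dist v z ≤ G.dist v x + G.dist x z :=
    (hxy.trans hzy.symm.reachable).dist_triangle_right v
  rw [SimpleGraph.dist_eq_one_iff_adj.2 hzy] at hvy
  rw [mem_gInterval] at hx
  exact ⟨z, hzy, mem_gInterval.2 (by omega), by omega⟩

namespace IsModularGraph

theorem exists_midpoint_of_dist_eq (hG : IsModularGraph G) (h : G.dist v x = G.dist v y) :
    ∃ m ∈ gInterval G v x, G.dist m x = G.dist m y ∧ 2 * G.dist m x = G.dist x y := by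
  obtain ⟨m, hxy, hyv, hvx⟩ := hG.2 x y v
  rw [gInterval_comm, mem_gInterval] at hyv
  rw [mem_gInterval, G.dist_comm (u := x) (v := m)] at hxy
  rw [mem_gInterval] at hvx
  exact ⟨m, hvx, by omega, by omega⟩

theorem dist_ne_of_adj (hG : IsModularGraph G) (v : V) (hxy : G.Adj x y) :
    G.dist v x ≠ G.dist v y := by
  intro h
  obtain ⟨m, -, -, hm⟩ := hG.exists_midpoint_of_dist_eq h
  rw [SimpleGraph.dist_eq_one_iff_adj.2 hxy] at hm
  omega

theorem dist_add_one_eq_or_of_adj (hG : IsModularGraph G) (v : V) (hxy : G.Adj x y) :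
    G.dist v x + 1 = G.dist v y ∨ G.dist v y + 1 = G.dist v x := by
  have hne := hG.dist_ne_of_adj v hxy
  have hdiff := hxy.diff_dist_adj (u := v)
  omega

theorem quadrangle_condition (hG : IsModularGraph G) (hxz : G.Adj x z) (hyz : G.Adj y z)
    (hne : x ≠ y) (h : G.dist v x = G.dist v y) :
    ∃ m, G.Adj m x ∧ G.Adj m y ∧ G.dist v m + 1 = G.dist v x := by
  obtain ⟨m, hmvx, hmxy, hm⟩ := hG.exists_midpoint_of_dist_eq h
  have hpos : 0 < G.dist x y := hG.1.pos_dist_of_ne hne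
  have hle : G.dist x y ≤ 2 := SimpleGraph.dist_le (.cons hxz hyz.symm.toWalk)
  have hmx : G.dist m x = 1 := by omega
  rw [mem_gInterval, hmx] at hmvx
  exact ⟨m, SimpleGraph.dist_eq_one_iff_adj.1 hmx,
    SimpleGraph.dist_eq_one_iff_adj.1 (hmxy ▸ hmx), hmvx⟩

end IsModularGraph

variable {o : GraphOrientation G}

theorem oFilter_subset_of_mem (hx : x ∈ oFilter o v) : oFilter o x ⊆ oFilter o v :=
  fun _ hy => Relation.ReflTransGen.trans hx hy

namespace IsAdmissible

theorem dir_and_mem_oFilter_of_adj (ho : IsAdmissible G o) (hG : IsModularGraph G)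
    (hy : y ∈ oFilter o v) (hzy : G.Adj z y) (hd : G.dist v z + 1 = G.dist v y) :
    o.dir z y ∧ z ∈ oFilter o v := by
  change Relation.ReflTransGen o.dir v y at hy
  induction hy generalizing z with
  | refl => simp at hd
  | @tail p y hvp hpy ih =>
    have hpy_adj : G.Adj p y := o.adj_of_dir p y hpy
    rcases hG.dist_add_one_eq_or_of_adj v hpy_adj with hp | hp
    · rcases eq_or_ne p z with rfl | hpz
      · exact ⟨hpy, hvp⟩
      obtain ⟨m, hmp, hmz, hm⟩ := hG.quadrangle_condition hpy_adj hzy hpz (v := v) (by omega)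
      have hmy : m ≠ y := by rintro rfl; omega
      obtain ⟨hmp_dir, hvm⟩ := ih hmp hm
      have hzy_dir : o.dir z y :=
        (ho m p y z hmp hpy_adj hzy.symm hmz.symm hmy hpz).1 hmp_dir
      have hmz_dir : o.dir m z :=
        (ho m z y p hmz hzy hpy_adj.symm hmp.symm hmy hpz.symm).2 hpy
      exact ⟨hzy_dir, Relation.ReflTransGen.tail hvm hmz_dir⟩
    · exact absurd (ih hpy_adj.symm hp).1 (o.asymm p y hpy)

theorem dist_add_one_eq_of_dir (ho : IsAdmissible G o) (hG : IsModularGraph G)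
    (hy : y ∈ oFilter o v) (hyz : o.dir y z) : G.dist v y + 1 = G.dist v z := by
  have hadj : G.Adj y z := o.adj_of_dir y z hyz
  refine (hG.dist_add_one_eq_or_of_adj v hadj).resolve_right fun hzy => ?_
  exact o.asymm y z hyz (ho.dir_and_mem_oFilter_of_adj hG hy hadj.symm hzy).1

theorem mem_gInterval_of_mem_oFilter (ho : IsAdmissible G o) (hG : IsModularGraph G)
    (hx : x ∈ oFilter o v) (hy : y ∈ oFilter o x) : x ∈ gInterval G v y := by
  change Relation.ReflTransGen o.dir x y at hy
  induction hy with
  | refl => exact right_mem_gInterval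
  | @tail y z hxy hyz ih =>
    rw [mem_gInterval] at ih ⊢
    rw [← ho.dist_add_one_eq_of_dir hG hxy hyz,
      ← ho.dist_add_one_eq_of_dir hG (oFilter_subset_of_mem hx hxy) hyz, ← ih, add_assoc]

theorem mem_oFilter_of_mem_gInterval (ho : IsAdmissible G o) (hG : IsModularGraph G)
    (hy : y ∈ oFilter o v) (hx : x ∈ gInterval G v y) : y ∈ oFilter o x := by
  induction hn : G.dist v y using Nat.strong_induction_on generalizing y with
  | _ n ih =>
    rcases eq_or_ne x y with rfl | hne
    · exact Relation.ReflTransGen.refl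
    obtain ⟨z, hzy, hxz, hd⟩ := exists_adj_mem_gInterval (hG.1 x y) hx hne
    obtain ⟨hzy_dir, hz⟩ := ho.dir_and_mem_oFilter_of_adj hG hy hzy hd
    exact Relation.ReflTransGen.tail (ih (G.dist v z) (by omega) hz hxz rfl) hzy_dir

theorem mem_oFilter_iff_mem_gInterval (ho : IsAdmissible G o) (hG : IsModularGraph G)
    (hx : x ∈ oFilter o v) (hy : y ∈ oFilter o v) : y ∈ oFilter o x ↔ x ∈ gInterval G v y :=
  ⟨ho.mem_gInterval_of_mem_oFilter hG hx, ho.mem_oFilter_of_mem_gInterval hG hy⟩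

end IsAdmissible

end

theorem oFilter_orders_general {V : Type} (G : SimpleGraph V) (hG : IsModularGraph G)
    (o : GraphOrientation G) (ho : IsAdmissible G o) (v : V) :
    (∀ x ∈ oFilter o v, ∀ y ∈ oFilter o v,
      (Relation.ReflTransGen o.dir x y ↔ x ∈ gInterval G v y)) ∧
    (∀ u ∈ oFilter o v,
      oFilter o u ⊆ oFilter o v ∧
      oFilter o u = {x ∈ oFilter o v | u ∈ gInterval G v x}) := by
  refine ⟨fun x hx y hy => ho.mem_oFilter_iff_mem_gInterval hG hx hy,
    fun u hu => ⟨oFilter_subset_of_mem hu, Set.ext fun x => ?_⟩⟩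
  calc x ∈ oFilter o u
      ↔ x ∈ oFilter o v ∧ x ∈ oFilter o u :=
        (and_iff_right_of_imp fun hx => oFilter_subset_of_mem hu hx).symm
    _ ↔ x ∈ oFilter o v ∧ u ∈ gInterval G v x :=
        and_congr_right fun hx => ho.mem_oFilter_iff_mem_gInterval hG hu hx

/-- In a directed median graph `(G,o)`: (a) on the principal filter `F_o(v,G)`, the
order `⪯_o` coincides with the canonical basepoint order `≤_v` (where `x ≤_v y` iff
`x ∈ I(v,y)`); (b) for `u ∈ F_o(v,G)`, the filter `F_o(u,G)` is contained in
`F_o(v,G)` and coincides with the principal filter of `u` with respect to `≤_v`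
restricted to `F_o(v,G)`. -/
theorem oFilter_orders {V : Type} (G : SimpleGraph V) (hG : IsMedianGraph G)
    (o : GraphOrientation G) (ho : IsAdmissible G o) (v : V) :
    (∀ x ∈ oFilter o v, ∀ y ∈ oFilter o v,
      (Relation.ReflTransGen o.dir x y ↔ x ∈ gInterval G v y)) ∧
    (∀ u ∈ oFilter o v,
      oFilter o u ⊆ oFilter o v ∧
      oFilter o u = {x ∈ oFilter o v | u ∈ gInterval G v x}) :=
  oFilter_orders_general G hG.isModularGraph o ho v
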